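/- Let S = ℤ^d, let γ[·] be a translation-covariant random specification on Ω = E^{ℤ^d} such that 𝒢(γ[ξ]) ≠ ∅ for ℙ-almost every ξ, and let ξ ↦ μ[ξ] be a translation-covariant random infinite-volume Gibbs measure, i.e. an ℋ–e(𝒫(Ω))-measurable map with μ[ξ] ∈ 𝒢(γ[ξ]) for ℙ-almost every ξ. Then there exists a map w : H → 𝒫(𝒫(Ω)) satisfying the conclusions of the extremal decomposition theorem — namely: ξ ↦ w[ξ] is ℋ–e(𝒫(𝒫(Ω)))-measurable; for ℙ-almost every ξ, w[ξ]-almost every ν belongs to ex 𝒢(γ[ξ]); and for ℙ-almost every ξ, μ[ξ](A) = ∫ ν(A) w[ξ](dν) for every A ∈ ℱ — which is in addition translation invariant: for every j ∈ ℤ^d and every M ∈ e(𝒫(Ω)), w[θ_jξ](θ_jM) = w[ξ](M) for ℙ-almost every ξ, where θ_jM = {θ_jν : ν ∈ M}. -/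

import Mathlib

open MeasureTheory Filter Topology
open scoped ENNReal NNReal

namespace GibbsMeta

variable {S E H : Type*}

/-- The sub-σ-algebra `ℱ_Δ` of the product σ-algebra on `Ω = E^S` generated by the
coordinate projections with indices in `Δ ⊆ S`. -/
def cylSigma (S E : Type*) [MeasurableSpace E] (Δ : Set S) : MeasurableSpace (S → E) :=
  ⨆ i ∈ Δ, MeasurableSpace.comap (fun ω : S → E => ω i) inferInstance

/-- The tail σ-algebra `𝒯 = ⋂_{Λ finite} ℱ_{Λᶜ}`. -/
def tailSigma (S E : Type*) [MeasurableSpace E] : MeasurableSpace (S → E) :=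
  ⨅ Λ : Finset S, cylSigma S E ((↑Λ : Set S)ᶜ)

/-- A specification: a family of proper, consistent probability kernels indexed by
finite volumes, with `γ_Λ(A|·)` being `ℱ_{Λᶜ}`-measurable. -/
structure IsSpecification [MeasurableSpace E]
    (γ : Finset S → (S → E) → Measure (S → E)) : Prop where
  prob : ∀ (Λ : Finset S) (ω : S → E), IsProbabilityMeasure (γ Λ ω)
  meas : ∀ (Λ : Finset S) (A : Set (S → E)), MeasurableSet A →
    Measurable[cylSigma S E ((↑Λ : Set S)ᶜ)] fun ω => γ Λ ω A
  proper : ∀ (Λ : Finset S) (A : Set (S → E)),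
    MeasurableSet[cylSigma S E ((↑Λ : Set S)ᶜ)] A →
    ∀ ω, γ Λ ω A = A.indicator (fun _ => (1 : ℝ≥0∞)) ω
  consistent : ∀ (Δ Λ : Finset S), Δ ⊆ Λ → ∀ (A : Set (S → E)), MeasurableSet A →
    ∀ ω, ∫⁻ σ, γ Δ σ A ∂(γ Λ ω) = γ Λ ω A

/-- The set `𝒢(γ)` of (probability) Gibbs measures for the specification `γ`,
i.e. solutions of the DLR equations. -/
def Gibbs [MeasurableSpace E] (γ : Finset S → (S → E) → Measure (S → E)) :
    Set (Measure (S → E)) :=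
  {μ | IsProbabilityMeasure μ ∧
    ∀ (Λ : Finset S) (A : Set (S → E)), MeasurableSet A → ∫⁻ ω, γ Λ ω A ∂μ = μ A}

/-- The set `ex 𝒢(γ)` of extreme points of the convex set `𝒢(γ)`. -/
def exGibbs [MeasurableSpace E] (γ : Finset S → (S → E) → Measure (S → E)) :
    Set (Measure (S → E)) :=
  {μ | μ ∈ Gibbs γ ∧ ∀ ν₁ ∈ Gibbs γ, ∀ ν₂ ∈ Gibbs γ, ∀ t : ℝ≥0∞, 0 < t → t < 1 →
    μ = t • ν₁ + (1 - t) • ν₂ → ν₁ = μ ∧ ν₂ = μ}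

/-- A random specification: a measurable family of specifications. -/
structure IsRandomSpecification [MeasurableSpace E] [MeasurableSpace H]
    (γ : H → Finset S → (S → E) → Measure (S → E)) : Prop where
  spec : ∀ ξ, IsSpecification (γ ξ)
  jointMeas : ∀ (Λ : Finset S) (A : Set (S → E)), MeasurableSet A →
    Measurable fun p : H × (S → E) => γ p.1 Λ p.2 A

/-- The shift `θ_j` on configurations `ω ∈ E^{ℤᵈ}`: `(θ_jω)_i = ω_{i-j}`. -/
def shift {E : Type*} {d : ℕ} (j : Fin d → ℤ) (ω : (Fin d → ℤ) → E) : (Fin d → ℤ) → E :=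
  fun i => ω (i - j)

/-- The shift `θ_j` on finite volumes: `θ_jΛ = {i + j : i ∈ Λ}`. -/
def shiftFinset {d : ℕ} (j : Fin d → ℤ) (Λ : Finset (Fin d → ℤ)) : Finset (Fin d → ℤ) :=
  Λ.image fun i => i + j

/-- The shift `θ_j` on measures: `(θ_jν)(A) = ν(θ_{-j}A)`, realized as the pushforward
of `ν` under `θ_j`. -/
noncomputable def shiftMeasure {E : Type*} [MeasurableSpace E] {d : ℕ} (j : Fin d → ℤ)
    (ν : MeasureTheory.Measure ((Fin d → ℤ) → E)) : MeasureTheory.Measure ((Fin d → ℤ) → E) :=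
  ν.map (shift j)

/-! The measures `w[ξ]` can be built from `μ[ξ]` alone: `w[ξ]` is the law, under `μ[ξ]`, of the
conditional distribution of `μ[ξ]` given the tail σ-algebra. As every permutation of the sites
preserves the tail σ-algebra, any covariance of `μ` passes to `w`.

Extremality comes from the downward Lévy theorem. Conditioning a Gibbs measure on `ℱ_{Λᶜ}` gives
`γ_Λ`, so along an exhaustion `V n` of the sites the kernels `γ_{V n}(· | ω)` converge to the
tail-conditional measure for almost every boundary condition `ω`. Hence almost every
tail-conditional measure `ν` is a Gibbs measure which `ν`-almost every boundary condition recovers.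
A Gibbs measure `P ≪ ν` is recovered by the same boundary conditions, so `P = ν`, and `ν` is
extreme.

The tail σ-algebra is not countably generated, so measurability in `ξ` is again obtained as a limit:
each `ℱ_{V nᶜ}` is countably generated, which gives conditional distributions jointly measurable in
`(ξ, ω)`, and their distribution functions on a countable separating family of sets converge. -/

section ExtremalDecomposition

open ProbabilityTheory

section Projection

variable {𝕜 F : Type*} [RCLike 𝕜] [NormedAddCommGroup F] [InnerProductSpace 𝕜 F] [CompleteSpace F]

theorem tendsto_starProjection_of_antitone {ι : Type*} [Preorder ι]
    {U : ι → Submodule 𝕜 F} {V : Submodule 𝕜 F} [∀ i, (U i).HasOrthogonalProjection]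
    [V.HasOrthogonalProjection] (hU : Antitone U) (hV : ⨅ i, U i = V) (x : F) :
    Tendsto (fun i => (U i).starProjection x) atTop (𝓝 (V.starProjection x)) := by
  have closure_eq : (⨆ i, (U i)ᗮ).topologicalClosure = Vᗮ := by
    rw [← Submodule.orthogonal_orthogonal_eq_closure, ← Submodule.iInf_orthogonal]
    simp only [Submodule.orthogonal_orthogonal, hV]
  have tendsto_orthogonal := Submodule.starProjection_tendsto_closure_iSup (fun i => (U i)ᗮ)
    (fun i j hij => Submodule.orthogonal_le (hU hij)) x
  simp only [closure_eq, Submodule.starProjection_orthogonal_val] at tendsto_orthogonal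
  simpa using tendsto_orthogonal.const_sub x

end Projection

section LevyDownward

variable {Ω : Type*} {m0 : MeasurableSpace Ω} {P : Measure Ω} {m : ℕ → MeasurableSpace Ω}

theorem aestronglyMeasurable_iInf_of_antitone {f : Ω → ℝ} (hm : Antitone m)
    (hf : ∀ n, AEStronglyMeasurable[m n] f P) : AEStronglyMeasurable[⨅ n, m n] f P := by
  choose g g_meas f_eq_g using hf
  refine ⟨fun ω => limsup (fun n => g n ω) atTop, ?_, ?_⟩
  · refine Measurable.stronglyMeasurable fun s hs =>
      MeasurableSpace.measurableSet_iInf.2 fun k => ?_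
    have limsup_shift : (fun ω => limsup (fun n => g n ω) atTop)
        = fun ω => limsup (fun n => g (n + k) ω) atTop :=
      funext fun ω => (limsup_nat_add (fun n => g n ω) k).symm
    rw [limsup_shift]
    refine Measurable.limsup (mδ := m k) (fun n => ?_) hs
    exact (g_meas (n + k)).measurable.mono (hm (Nat.le_add_left k n)) le_rfl
  · filter_upwards [ae_all_iff.2 f_eq_g] with ω hω
    simp [← hω]

theorem iInf_lpMeas_of_antitone (hm : Antitone m) (p : ℝ≥0∞) :
    ⨅ n, lpMeas ℝ ℝ (m n) p P = lpMeas ℝ ℝ (⨅ n, m n) p P := by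
  ext f
  simp only [Submodule.mem_iInf, mem_lpMeas_iff_aestronglyMeasurable]
  exact ⟨aestronglyMeasurable_iInf_of_antitone hm, fun hf n => hf.mono (iInf_le m n)⟩

theorem eLpNorm_one_condExp_sub_condExp_le {f g : Ω → ℝ} (hf : Integrable f P)
    (hg : Integrable g P) (m : MeasurableSpace Ω) :
    eLpNorm (P[f | m] - P[g | m]) 1 P ≤ eLpNorm (f - g) 1 P :=
  (eLpNorm_congr_ae (condExp_sub hf hg m)).symm.trans_le (eLpNorm_condExp_le_eLpNorm _ le_rfl)

theorem starProjection_lpMeas_toLp_ae_eq_condExp {m m0 : MeasurableSpace Ω} {P : Measure Ω}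
    [IsFiniteMeasure P] [hm : Fact (m ≤ m0)] {f : Ω → ℝ} (hf : MemLp f 2 P) :
    (lpMeas ℝ ℝ m 2 P).starProjection hf.toLp =ᵐ[P] P[f | m] :=
  hf.condExpL2_ae_eq_condExp (𝕜 := ℝ) hm.out

variable [IsFiniteMeasure P]

theorem tendsto_eLpNorm_two_condExp_sub_of_antitone {f : Ω → ℝ} (hm : Antitone m)
    (hm_le : ∀ n, m n ≤ m0) (hf : MemLp f 2 P) :
    Tendsto (fun n => eLpNorm (P[f | m n] - P[f | ⨅ n, m n]) 2 P) atTop (𝓝 0) := by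
  have (n : ℕ) : Fact (m n ≤ m0) := ⟨hm_le n⟩
  have : Fact (⨅ n, m n ≤ m0) := ⟨(iInf_le m 0).trans (hm_le 0)⟩
  have tendsto_proj := tendsto_starProjection_of_antitone
    (U := fun n => lpMeas ℝ ℝ (m n) 2 P)
    (fun n k hnk g hg => mem_lpMeas_iff_aestronglyMeasurable.2
      ((mem_lpMeas_iff_aestronglyMeasurable.1 hg).mono (hm hnk)))
    (iInf_lpMeas_of_antitone hm 2) hf.toLp
  rw [Lp.tendsto_Lp_iff_tendsto_eLpNorm'] at tendsto_proj
  refine tendsto_proj.congr fun n => eLpNorm_congr_ae ?_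
  exact (starProjection_lpMeas_toLp_ae_eq_condExp (m := m n) hf).sub
    (starProjection_lpMeas_toLp_ae_eq_condExp (m := ⨅ n, m n) hf)

theorem tendsto_eLpNorm_one_condExp_sub_of_antitone_of_memLp_two {f : Ω → ℝ} (hm : Antitone m)
    (hm_le : ∀ n, m n ≤ m0) (hf : MemLp f 2 P) :
    Tendsto (fun n => eLpNorm (P[f | m n] - P[f | ⨅ n, m n]) 1 P) atTop (𝓝 0) := by
  have tendsto_two := tendsto_eLpNorm_two_condExp_sub_of_antitone hm hm_le hf
  have tendsto_two_mul := ENNReal.Tendsto.mul_const tendsto_two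
    (b := P Set.univ ^ (1 / (1 : ℝ≥0∞).toReal - 1 / (2 : ℝ≥0∞).toReal))
    (Or.inr (ENNReal.rpow_ne_top_of_nonneg (by norm_num) (measure_ne_top P _)))
  rw [zero_mul] at tendsto_two_mul
  exact tendsto_of_tendsto_of_tendsto_of_le_of_le tendsto_const_nhds tendsto_two_mul
    (fun _ => zero_le) fun n => eLpNorm_le_eLpNorm_mul_rpow_measure_univ one_le_two
      (integrable_condExp.sub integrable_condExp).aestronglyMeasurable

theorem tendsto_eLpNorm_one_condExp_sub_of_antitone {f : Ω → ℝ} (hm : Antitone m)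
    (hm_le : ∀ n, m n ≤ m0) (hf : Integrable f P) :
    Tendsto (fun n => eLpNorm (P[f | m n] - P[f | ⨅ n, m n]) 1 P) atTop (𝓝 0) := by
  refine ENNReal.tendsto_nhds_zero.2 fun ε hε => ?_
  obtain ⟨g, hfg, hg⟩ := (memLp_one_iff_integrable.2 hf).exists_simpleFunc_eLpNorm_sub_lt
    ENNReal.one_ne_top (ENNReal.div_pos hε.ne' ENNReal.ofNat_ne_top).ne' (ε := ε / 3)
  have tendsto_g := tendsto_eLpNorm_one_condExp_sub_of_antitone_of_memLp_two hm hm_le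
    (g.memLp_of_isFiniteMeasure 2 P)
  filter_upwards [ENNReal.tendsto_nhds_zero.1 tendsto_g (ε / 3) (by simpa using hε.ne')] with n hn
  have g_int : Integrable g P := memLp_one_iff_integrable.1 hg
  have condExp_near (m' : MeasurableSpace Ω) : eLpNorm (P[f | m'] - P[g | m']) 1 P ≤ ε / 3 :=
    (eLpNorm_one_condExp_sub_condExp_le hf g_int m').trans hfg.le
  calc eLpNorm (P[f | m n] - P[f | ⨅ n, m n]) 1 P
      = eLpNorm ((P[f | m n] - P[g | m n]) + (P[g | m n] - P[g | ⨅ n, m n])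
          - (P[f | ⨅ n, m n] - P[g | ⨅ n, m n])) 1 P := by congr 1; ring
    _ ≤ eLpNorm (P[f | m n] - P[g | m n]) 1 P + eLpNorm (P[g | m n] - P[g | ⨅ n, m n]) 1 P
          + eLpNorm (P[f | ⨅ n, m n] - P[g | ⨅ n, m n]) 1 P := by
        refine (eLpNorm_sub_le ?_ ?_ le_rfl).trans (add_le_add_left (eLpNorm_add_le ?_ ?_ le_rfl) _)
        all_goals fun_prop
    _ ≤ ε / 3 + ε / 3 + ε / 3 := by gcongr <;> exact condExp_near _
    _ = ε := ENNReal.add_thirds ε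

theorem mul_measure_exists_le_abs_condExp_le_of_le (hm : Antitone m) (hm_le : ∀ n, m n ≤ m0)
    (g : Ω → ℝ) (ε : ℝ≥0) (N : ℕ) :
    ε * P {ω | ∃ k ≤ N, ε ≤ |(P[g | m k]) ω|} ≤ eLpNorm g 1 P := by
  let reversed : Filtration ℕ m0 :=
    { seq := fun i => m (N - i)
      mono' := fun i j hij => hm (Nat.sub_le_sub_left hij N)
      le' := fun i => hm_le _ }
  have martingale : Martingale (fun i => P[g | reversed i]) reversed P :=
    martingale_condExp g reversed P
  have submartingale_abs : Submartingale (fun i => |P[g | reversed i]|) reversed P :=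
    martingale.submartingale.sup martingale.neg.submartingale
  have maximal := maximal_ineq (ε := ε) submartingale_abs (fun i ω => abs_nonneg _) N
  have set_eq : {ω | ∃ k ≤ N, (ε : ℝ) ≤ |(P[g | m k]) ω|} = {ω | (ε : ℝ) ≤
      (Finset.range (N + 1)).sup' Finset.nonempty_range_add_one
        fun k => |P[g | reversed k]| ω} := by
    ext ω
    simp only [Set.mem_ofPred_eq, Finset.le_sup'_iff, Finset.mem_range, Order.lt_add_one_iff]
    constructor
    · rintro ⟨k, hk, hle⟩
      exact ⟨N - k, N.sub_le k, by simpa [reversed, Nat.sub_sub_self hk] using hle⟩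
    · rintro ⟨k, -, hle⟩
      exact ⟨N - k, N.sub_le k, hle⟩
  calc ε * P {ω | ∃ k ≤ N, ε ≤ |(P[g | m k]) ω|}
      ≤ ENNReal.ofReal (∫ ω, ‖(P[g | reversed N]) ω‖ ∂P) := by
        rw [set_eq]
        exact maximal.trans (ENNReal.ofReal_le_ofReal (setIntegral_le_integral
          (submartingale_abs.integrable N) (ae_of_all _ fun ω => abs_nonneg _)))
    _ = eLpNorm (P[g | reversed N]) 1 P := by
        rw [ofReal_integral_norm_eq_lintegral_enorm integrable_condExp,
          eLpNorm_one_eq_lintegral_enorm]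
    _ ≤ eLpNorm g 1 P := eLpNorm_condExp_le_eLpNorm g le_rfl

theorem mul_measure_exists_le_abs_condExp_le (hm : Antitone m) (hm_le : ∀ n, m n ≤ m0)
    (g : Ω → ℝ) (ε : ℝ≥0) :
    ε * P {ω | ∃ k, ε ≤ |(P[g | m k]) ω|} ≤ eLpNorm g 1 P := by
  have set_eq : {ω | ∃ k, ε ≤ |(P[g | m k]) ω|} = ⋃ N, {ω | ∃ k ≤ N, ε ≤ |(P[g | m k]) ω|} := by
    ext ω
    simp only [Set.mem_ofPred_eq, Set.mem_iUnion]
    exact ⟨fun ⟨k, hk⟩ => ⟨k, k, le_rfl, hk⟩, fun ⟨_, k, _, hk⟩ => ⟨k, hk⟩⟩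
  have set_mono : Monotone fun N => {ω | ∃ k ≤ N, ε ≤ |(P[g | m k]) ω|} :=
    fun N N' hN ω ⟨k, hk, hle⟩ => ⟨k, hk.trans hN, hle⟩
  rw [set_eq, set_mono.measure_iUnion, ENNReal.mul_iSup]
  exact iSup_le fun N => mul_measure_exists_le_abs_condExp_le_of_le hm hm_le g ε N

theorem condExp_condExp_sub_condExp_iInf {f : Ω → ℝ} (hm : Antitone m) (hm_le : ∀ n, m n ≤ m0)
    {n k : ℕ} (hnk : n ≤ k) :
    P[P[f | m n] - P[f | ⨅ n, m n] | m k] =ᵐ[P] P[f | m k] - P[f | ⨅ n, m n] := by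
  have condExp_iInf : P[P[f | ⨅ n, m n] | m k] = P[f | ⨅ n, m n] :=
    condExp_of_stronglyMeasurable (hm_le k) (stronglyMeasurable_condExp.mono (iInf_le m k))
      integrable_condExp
  refine (condExp_sub integrable_condExp integrable_condExp (m k)).trans ?_
  rw [condExp_iInf]
  exact (condExp_condExp_of_le (hm hnk) (hm_le n)).sub EventuallyEq.rfl

theorem mul_measure_frequently_le_abs_condExp_sub_le {f : Ω → ℝ} (hm : Antitone m)
    (hm_le : ∀ n, m n ≤ m0) (ε : ℝ≥0) (n : ℕ) :
    ε * P {ω | ∃ᶠ k in atTop, ε ≤ |(P[f | m k] - P[f | ⨅ n, m n]) ω|}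
      ≤ eLpNorm (P[f | m n] - P[f | ⨅ n, m n]) 1 P := by
  refine le_trans ?_ (mul_measure_exists_le_abs_condExp_le (m := fun k => m (n + k))
    (fun i j hij => hm (Nat.add_le_add_left hij n)) (fun k => hm_le _) _ ε)
  gcongr 1
  refine measure_mono_ae ?_
  filter_upwards [ae_all_iff.2 fun k =>
    condExp_condExp_sub_condExp_iInf (P := P) (f := f) hm hm_le (Nat.le_add_right n k)]
    with ω hω h_frequently
  obtain ⟨k, hnk, hk⟩ := frequently_atTop.1 h_frequently n
  obtain ⟨i, rfl⟩ := Nat.exists_eq_add_of_le hnk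
  exact ⟨i, by rwa [hω i]⟩

theorem ae_tendsto_condExp_iInf_of_antitone {f : Ω → ℝ} (hm : Antitone m)
    (hm_le : ∀ n, m n ≤ m0) (hf : Integrable f P) :
    ∀ᵐ ω ∂P, Tendsto (fun n => (P[f | m n]) ω) atTop (𝓝 ((P[f | ⨅ n, m n]) ω)) := by
  have eventually_lt (ε : ℝ≥0) (hε : 0 < ε) :
      ∀ᵐ ω ∂P, ∀ᶠ n in atTop, |(P[f | m n] - P[f | ⨅ n, m n]) ω| < ε := by
    have mul_le_zero := ge_of_tendsto' (tendsto_eLpNorm_one_condExp_sub_of_antitone hm hm_le hf)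
      (mul_measure_frequently_le_abs_condExp_sub_le hm hm_le ε)
    rw [nonpos_iff_eq_zero, mul_eq_zero, or_iff_right (by simpa using hε.ne')] at mul_le_zero
    simpa only [ae_iff, not_eventually, not_lt] using mul_le_zero
  obtain ⟨u, -, u_pos, u_tendsto⟩ := exists_seq_strictAnti_tendsto (0 : ℝ≥0)
  filter_upwards [ae_all_iff.2 fun i => eventually_lt (u i) (u_pos i)] with ω hω
  refine Metric.tendsto_nhds.2 fun ε hε => ?_
  obtain ⟨i, hi⟩ := (u_tendsto.eventually_lt_const (Real.toNNReal_pos.2 hε)).exists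
  filter_upwards [hω i] with n hn
  exact hn.trans (Real.lt_toNNReal_iff_coe_lt.1 hi)

end LevyDownward

section Cut

/-- The preimage of the rational ray `(-∞, q]` under a Borel embedding `Ω → ℝ`. The values of a
probability measure on these countably many sets are its distribution function in disguise: they
determine the measure, and they recover it measurably. -/
def cut (Ω : Type*) [MeasurableSpace Ω] [StandardBorelSpace Ω] (q : ℚ) : Set Ω :=
  embeddingReal Ω ⁻¹' Set.Iic (q : ℝ)

theorem eq_of_forall_Iic_rat {μ ν : Measure ℝ} [IsProbabilityMeasure μ] [IsProbabilityMeasure ν]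
    (h : ∀ q : ℚ, μ (Set.Iic (q : ℝ)) = ν (Set.Iic (q : ℝ))) : μ = ν := by
  refine ext_of_generate_finite _ ((BorelSpace.measurable_eq (α := ℝ)).trans
    Real.borel_eq_generateFrom_Iic_rat) Real.isPiSystem_Iic_rat ?_ (by simp)
  simpa only [Set.mem_iUnion, Set.mem_singleton_iff, forall_exists_index, forall_eq_apply_imp_iff]
    using h

theorem isRatStieltjesPoint_of_eq_cdf {X : Type*} {f : X → ℚ → ℝ} {x : X} (ν : Measure ℝ)
    (h : ∀ q : ℚ, f x q = cdf ν q) : IsRatStieltjesPoint f x where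
  mono a b hab := by
    rw [h, h]
    exact monotone_cdf ν (Rat.cast_le.2 hab)
  tendsto_atTop_one := ((tendsto_cdf_atTop ν).comp (tendsto_ratCast_atTop_iff.2 tendsto_id)).congr
    fun q => (h q).symm
  tendsto_atBot_zero := ((tendsto_cdf_atBot ν).comp (tendsto_ratCast_atBot_iff.2 tendsto_id)).congr
    fun q => (h q).symm
  iInf_rat_gt_eq t := by
    rw [h, ← (cdf ν).iInf_rat_gt_eq t]
    simp only [h]
    exact Equiv.iInf_congr (Equiv.subtypeEquivRight fun r => by simp) fun r => rfl

variable {Ω : Type*} [MeasurableSpace Ω] [StandardBorelSpace Ω]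

theorem measurableSet_cut (q : ℚ) : MeasurableSet (cut Ω q) :=
  measurable_embeddingReal Ω measurableSet_Iic

theorem map_embeddingReal_Iic (μ : Measure Ω) (q : ℚ) :
    μ.map (embeddingReal Ω) (Set.Iic (q : ℝ)) = μ (cut Ω q) :=
  Measure.map_apply (measurable_embeddingReal Ω) measurableSet_Iic

theorem eq_of_forall_cut {μ ν : Measure Ω} [IsProbabilityMeasure μ] [IsProbabilityMeasure ν]
    (h : ∀ q, μ (cut Ω q) = ν (cut Ω q)) : μ = ν := by
  have map_eq : μ.map (embeddingReal Ω) = ν.map (embeddingReal Ω) := by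
    have (ρ : Measure Ω) [IsProbabilityMeasure ρ] :
        IsProbabilityMeasure (ρ.map (embeddingReal Ω)) :=
      Measure.isProbabilityMeasure_map (measurable_embeddingReal Ω).aemeasurable
    exact eq_of_forall_Iic_rat fun q => by simp only [map_embeddingReal_Iic, h]
  have embedding := measurableEmbedding_embeddingReal Ω
  rw [← embedding.comap_map μ, map_eq, embedding.comap_map]

theorem exists_measurable_eq_of_cdf {X : Type*} [MeasurableSpace X] {F : X → ℚ → ℝ}
    (hF : Measurable F) :
    ∃ p : X → Measure Ω, Measurable p ∧ ∀ x (ν : Measure Ω), IsProbabilityMeasure ν →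
      (∀ q, F x q = ν.real (cut Ω q)) → p x = ν := by
  have embedding := measurableEmbedding_embeddingReal Ω
  let K : X → Measure ℝ := fun x => (stieltjesOfMeasurableRat F hF x).measure
  have K_meas : Measurable K := measurable_measure_stieltjesOfMeasurableRat hF
  refine ⟨fun x => (K x).comap (embeddingReal Ω), ?_, fun x ν hν hFν => ?_⟩
  · refine Measure.measurable_of_measurable_coe _ fun A hA => ?_
    simp only [embedding.comap_apply]
    exact (Measure.measurable_coe (embedding.measurableSet_image.2 hA)).comp K_meas
  have : IsProbabilityMeasure (ν.map (embeddingReal Ω)) :=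
    Measure.isProbabilityMeasure_map embedding.measurable.aemeasurable
  have : IsProbabilityMeasure (K x) := ⟨measure_stieltjesOfMeasurableRat_univ hF x⟩
  have stieltjes_point : IsRatStieltjesPoint F x := by
    refine isRatStieltjesPoint_of_eq_cdf (ν.map (embeddingReal Ω)) fun q => ?_
    rw [hFν, cdf_eq_real, measureReal_def, measureReal_def, map_embeddingReal_Iic]
  have K_eq : K x = ν.map (embeddingReal Ω) := by
    refine eq_of_forall_Iic_rat fun q => ?_
    rw [measure_stieltjesOfMeasurableRat_Iic, stieltjesOfMeasurableRat_eq,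
      toRatCDF_of_isRatStieltjesPoint stieltjes_point, hFν, ofReal_measureReal,
      map_embeddingReal_Iic]
  change (K x).comap (embeddingReal Ω) = ν
  rw [K_eq, embedding.comap_map]

theorem exists_measurable_limit {X : Type*} [MeasurableSpace X] {k : ℕ → X → Measure Ω}
    (hk : ∀ n, Measurable (k n)) :
    ∃ p : X → Measure Ω, Measurable p ∧ ∀ x (ν : Measure Ω), IsProbabilityMeasure ν →
      (∀ q, Tendsto (fun n => (k n x).real (cut Ω q)) atTop (𝓝 (ν.real (cut Ω q)))) → p x = ν := by
  have limsup_meas : Measurable fun x q => limsup (fun n => (k n x).real (cut Ω q)) atTop :=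
    measurable_pi_lambda _ fun q => Measurable.limsup fun n =>
      ((Measure.measurable_coe (measurableSet_cut q)).comp (hk n)).ennreal_toReal
  obtain ⟨p, p_meas, p_eq⟩ := exists_measurable_eq_of_cdf (Ω := Ω) limsup_meas
  exact ⟨p, p_meas, fun x ν hν hlim => p_eq x ν hν fun q => (hlim q).limsup_eq⟩

end Cut

section CondExpKernel

theorem ae_eq_of_forall_cut {X Ω : Type*} [MeasurableSpace X] [MeasurableSpace Ω]
    [StandardBorelSpace Ω] {P : Measure X} {k l : X → Measure Ω}
    (hk : ∀ x, IsProbabilityMeasure (k x)) (hl : ∀ x, IsProbabilityMeasure (l x))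
    (h : ∀ q, ∀ᵐ x ∂P, (k x).real (cut Ω q) = (l x).real (cut Ω q)) : k =ᵐ[P] l := by
  filter_upwards [ae_all_iff.2 h] with x hx
  exact eq_of_forall_cut fun q => (measureReal_eq_measureReal_iff).1 (hx q)

theorem condExp_map_comp_ae_eq {Ω Ω' : Type*} {m' : MeasurableSpace Ω'} [MeasurableSpace Ω]
    [mΩ' : MeasurableSpace Ω'] {P : Measure Ω} [IsFiniteMeasure P] {f : Ω → Ω'}
    (hm' : m' ≤ mΩ') (hf : Measurable f) {g : Ω' → ℝ} (hg : Integrable g (P.map f)) :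
    (P.map f)[g | m'] ∘ f =ᵐ[P] P[g ∘ f | m'.comap f] := by
  have hle : m'.comap f ≤ ‹MeasurableSpace Ω› := (MeasurableSpace.comap_mono hm').trans hf.comap_le
  have hint : Integrable ((P.map f)[g | m'] ∘ f) P := integrable_condExp.comp_measurable hf
  refine ae_eq_condExp_of_forall_setIntegral_eq hle (hg.comp_measurable hf)
    (fun s _ _ => hint.integrableOn) ?_
    (stronglyMeasurable_condExp.comp_measurable (comap_measurable f)).aestronglyMeasurable
  rintro _ ⟨t, ht, rfl⟩ -
  calc ∫ ω in f ⁻¹' t, ((P.map f)[g | m']) (f ω) ∂P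
      = ∫ ω' in t, ((P.map f)[g | m']) ω' ∂P.map f :=
        (setIntegral_map (hm' t ht) integrable_condExp.aestronglyMeasurable hf.aemeasurable).symm
    _ = ∫ ω' in t, g ω' ∂P.map f := setIntegral_condExp hm' hg ht
    _ = ∫ ω in f ⁻¹' t, g (f ω) ∂P := setIntegral_map (hm' t ht) hg.1 hf.aemeasurable

variable {Ω : Type*} {m : MeasurableSpace Ω} [mΩ : MeasurableSpace Ω] [StandardBorelSpace Ω]
  {P : Measure Ω} [IsFiniteMeasure P]

theorem condExpKernel_map_ae_eq {Ω' : Type*} {m' : MeasurableSpace Ω'} [mΩ' : MeasurableSpace Ω']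
    [StandardBorelSpace Ω'] {f : Ω → Ω'} (hm' : m' ≤ mΩ') (hf : Measurable f) :
    (fun ω => condExpKernel (P.map f) m' (f ω))
      =ᵐ[P] fun ω => (condExpKernel P (m'.comap f) ω).map f := by
  have hle : m'.comap f ≤ mΩ := (MeasurableSpace.comap_mono hm').trans hf.comap_le
  refine ae_eq_of_forall_cut (fun ω => inferInstance)
    (fun ω => Measure.isProbabilityMeasure_map hf.aemeasurable) fun q => ?_
  have hcut := measurableSet_cut (Ω := Ω') q
  have hint : Integrable ((cut Ω' q).indicator fun _ => (1 : ℝ)) (P.map f) :=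
    (integrable_const 1).indicator hcut
  filter_upwards [ae_of_ae_map hf.aemeasurable
      (condExpKernel_ae_eq_condExp hm' hcut (μ := P.map f)),
    condExp_map_comp_ae_eq hm' hf hint, condExpKernel_ae_eq_condExp hle (hf hcut) (μ := P)]
    with ω hmap hcomp hcond
  rw [hmap, map_measureReal_apply hf hcut, hcond]
  exact hcomp

theorem ae_tendsto_condExpKernel_iInf {m : ℕ → MeasurableSpace Ω} (hm : Antitone m)
    (hm_le : ∀ n, m n ≤ mΩ) {s : Set Ω} (hs : MeasurableSet s) :
    ∀ᵐ ω ∂P, Tendsto (fun n => (condExpKernel P (m n) ω).real s) atTop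
      (𝓝 ((condExpKernel P (⨅ n, m n) ω).real s)) := by
  filter_upwards [ae_tendsto_condExp_iInf_of_antitone (P := P) hm hm_le
      ((integrable_const 1).indicator hs),
    ae_all_iff.2 fun n => condExpKernel_ae_eq_condExp (μ := P) (hm_le n) hs,
    condExpKernel_ae_eq_condExp (μ := P) ((iInf_le m 0).trans (hm_le 0)) hs] with ω hlim hn hinf
  rw [hinf]
  exact hlim.congr fun n => (hn n).symm

theorem ae_ae_condExpKernel (hm : m ≤ mΩ) {p : Ω → Prop} (h : ∀ᵐ ω ∂P, p ω) :
    ∀ᵐ ω ∂P, ∀ᵐ σ ∂condExpKernel P m ω, p σ := by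
  rw [← condExpKernel_comp_trim (μ := P) hm] at h
  exact ae_of_ae_trim hm (Measure.ae_ae_of_ae_comp h)

theorem ae_condExpKernel_mem_iff (hm : m ≤ mΩ) {s : Set Ω} (hs : MeasurableSet[m] s) :
    ∀ᵐ ω ∂P, ∀ᵐ σ ∂condExpKernel P m ω, σ ∈ s ↔ ω ∈ s := by
  have hcond : P⟦s | m⟧ = s.indicator fun _ => (1 : ℝ) :=
    condExp_of_stronglyMeasurable hm (stronglyMeasurable_const.indicator hs)
      ((integrable_const 1).indicator (hm s hs))
  filter_upwards [condExpKernel_ae_eq_condExp hm (hm s hs) (μ := P)] with ω hω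
  rw [hcond] at hω
  by_cases hωs : ω ∈ s
  · simp only [hωs, iff_true]
    exact (mem_ae_iff_prob_eq_one (hm s hs)).2
      ((ENNReal.toReal_eq_one_iff _).1 (hω.trans (Set.indicator_of_mem hωs _)))
  · simp only [hωs, iff_false]
    exact measure_eq_zero_iff_ae_notMem.1
      ((measureReal_eq_zero_iff).1 (hω.trans (Set.indicator_of_notMem hωs _)))

theorem ae_condExpKernel_apply_eq {β : Type*} [MeasurableSpace β]
    [MeasurableSpace.CountablySeparated β] (hm : m ≤ mΩ) {X : Ω → β} (hX : Measurable[m] X) :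
    ∀ᵐ ω ∂P, ∀ᵐ σ ∂condExpKernel P m ω, X σ = X ω := by
  obtain ⟨s, hs, hsep⟩ := exists_seq_separating β (p := MeasurableSet) .empty Set.univ
  filter_upwards [ae_all_iff.2 fun n => ae_condExpKernel_mem_iff (P := P) hm (hX (hs n))] with ω hω
  filter_upwards [ae_all_iff.2 hω] with σ hσ
  exact hsep _ trivial _ trivial hσ

theorem ae_condExpKernel_condExpKernel_eq (hm : m ≤ mΩ) :
    ∀ᵐ ω ∂P, ∀ᵐ σ ∂condExpKernel P m ω, condExpKernel P m σ = condExpKernel P m ω := by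
  have hX : Measurable[m] fun ω => fun q => condExpKernel P m ω (cut Ω q) :=
    @measurable_pi_lambda _ _ _ m _ _ fun q => measurable_condExpKernel (measurableSet_cut q)
  filter_upwards [ae_condExpKernel_apply_eq hm hX] with ω hω
  filter_upwards [hω] with σ hσ
  exact eq_of_forall_cut (congr_fun hσ)

end CondExpKernel

section JointCondExpKernel

/-- The conditional distributions given `m` of the measures `κ x` have a version which is jointly
measurable in the parameter and the configuration. Mathlib's `condExpKernel (κ x) m` is chosen
separately for each `x`, so that its measurability in `x` has to be established. -/
def HasJointCondExpKernel {X Ω : Type*} [MeasurableSpace X] (m : MeasurableSpace Ω)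
    [MeasurableSpace Ω] [StandardBorelSpace Ω] (κ : Kernel X Ω) [IsMarkovKernel κ] : Prop :=
  ∃ p : X × Ω → Measure Ω, Measurable p ∧ ∀ x, ∀ᵐ ω ∂κ x, p (x, ω) = condExpKernel (κ x) m ω

variable {X Ω : Type*} [MeasurableSpace X] [mΩ : MeasurableSpace Ω] [StandardBorelSpace Ω]
  {κ : Kernel X Ω} [IsMarkovKernel κ]

theorem condDistrib_id_ae_eq_condExpKernel {β : Type*} [mβ : MeasurableSpace β] [Nonempty Ω]
    {P : Measure Ω} [IsFiniteMeasure P] {Y : Ω → β} (hY : Measurable Y) :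
    (fun ω => condDistrib id Y P (Y ω)) =ᵐ[P] condExpKernel P (mβ.comap Y) := by
  refine ae_eq_of_forall_cut (fun ω => inferInstance) (fun ω => inferInstance) fun q => ?_
  filter_upwards [condDistrib_apply_ae_eq_condExpKernel_map (μ := P) measurable_id hY
    (measurableSet_cut q)] with ω hω
  rw [measureReal_def, hω, Kernel.map_id, measureReal_def]

theorem hasJointCondExpKernel_comap {β : Type*} [mβ : MeasurableSpace β]
    [MeasurableSpace.CountablyGenerated β] {Y : Ω → β} (hY : Measurable Y) :
    HasJointCondExpKernel (mβ.comap Y) κ := by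
  rcases isEmpty_or_nonempty Ω with hΩ | hΩ
  · exact ⟨fun _ => 0, measurable_const, fun x => ae_of_all _ hΩ.elim⟩
  have hpair : Measurable fun ω => (Y ω, ω) := hY.prodMk measurable_id
  refine ⟨fun z => (κ.map fun ω => (Y ω, ω)).condKernel (z.1, Y z.2),
    (Kernel.measurable _).comp (measurable_fst.prodMk (hY.comp measurable_snd)), fun x => ?_⟩
  have hkernel := Kernel.condKernel_apply_eq_condKernel (κ.map fun ω => (Y ω, ω)) x
  rw [Kernel.fst_map_prod (f := Y) _ measurable_id', Kernel.map_apply _ hY] at hkernel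
  filter_upwards [ae_of_ae_map hY.aemeasurable hkernel, condDistrib_id_ae_eq_condExpKernel hY]
    with ω hω hcond
  rw [hω, ← hcond, condDistrib]
  simp only [Kernel.map_apply _ hpair, id]

theorem HasJointCondExpKernel.iInf {m : ℕ → MeasurableSpace Ω} (hm : Antitone m)
    (hm_le : ∀ n, m n ≤ mΩ) (h : ∀ n, HasJointCondExpKernel (m n) κ) :
    HasJointCondExpKernel (⨅ n, m n) κ := by
  choose k hk_meas hk_eq using h
  obtain ⟨p, hp_meas, hp⟩ := exists_measurable_limit hk_meas
  refine ⟨p, hp_meas, fun x => ?_⟩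
  filter_upwards [ae_all_iff.2 fun n => hk_eq n x, ae_all_iff.2 fun q =>
    ae_tendsto_condExpKernel_iInf (P := κ x) hm hm_le (measurableSet_cut q)] with ω hk hlim
  exact hp _ _ inferInstance fun q => (hlim q).congr fun n => by rw [hk n]

end JointCondExpKernel

section CondDecomposition

/-- The law, under `P`, of the random measure `condExpKernel P m`: a probability measure on
measures with barycenter `P`. -/
noncomputable def condDecomposition {Ω : Type*} (m : MeasurableSpace Ω) [MeasurableSpace Ω]
    [StandardBorelSpace Ω] (P : Measure Ω) [IsFiniteMeasure P] : Measure (Measure Ω) :=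
  P.map (condExpKernel P m)

variable {X Ω : Type*} [MeasurableSpace X] {m : MeasurableSpace Ω} [mΩ : MeasurableSpace Ω]
  [StandardBorelSpace Ω]

theorem measurable_condExpKernel_of_le {P : Measure Ω} [IsFiniteMeasure P] (hm : m ≤ mΩ) :
    Measurable (condExpKernel P m) :=
  (condExpKernel P m).measurable.mono hm le_rfl

theorem isProbabilityMeasure_condDecomposition (hm : m ≤ mΩ) (P : Measure Ω)
    [IsProbabilityMeasure P] : IsProbabilityMeasure (condDecomposition m P) :=
  Measure.isProbabilityMeasure_map (measurable_condExpKernel_of_le hm).aemeasurable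

theorem lintegral_condDecomposition_apply (hm : m ≤ mΩ) (P : Measure Ω) [IsFiniteMeasure P]
    {A : Set Ω} (hA : MeasurableSet A) : ∫⁻ ν, ν A ∂condDecomposition m P = P A := by
  rw [condDecomposition, lintegral_map (Measure.measurable_coe hA)
    (measurable_condExpKernel_of_le hm), ← lintegral_trim hm (measurable_condExpKernel hA),
    ← Measure.bind_apply hA (Kernel.aemeasurable _), condExpKernel_comp_trim hm]

theorem condDecomposition_map {Ω' : Type*} {m' : MeasurableSpace Ω'} [mΩ' : MeasurableSpace Ω']
    [StandardBorelSpace Ω'] {f : Ω → Ω'} (hm' : m' ≤ mΩ') (hf : Measurable f) (P : Measure Ω)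
    [IsFiniteMeasure P] :
    condDecomposition m' (P.map f) = (condDecomposition (m'.comap f) P).map (Measure.map f) := by
  rw [condDecomposition, condDecomposition, Measure.map_map (measurable_condExpKernel_of_le hm') hf,
    Measure.map_map (Measure.measurable_map f hf)
      (measurable_condExpKernel_of_le ((MeasurableSpace.comap_mono hm').trans hf.comap_le))]
  exact Measure.map_congr (condExpKernel_map_ae_eq hm' hf)

theorem HasJointCondExpKernel.measurable_condDecomposition {κ : Kernel X Ω} [IsMarkovKernel κ]
    (h : HasJointCondExpKernel m κ) : Measurable fun x => condDecomposition m (κ x) := by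
  obtain ⟨p, hp_meas, hp_eq⟩ := h
  refine Measure.measurable_of_measurable_coe _ fun M hM => ?_
  have hpreimage (x : X) : condDecomposition m (κ x) M = κ x (Prod.mk x ⁻¹' (p ⁻¹' M)) := by
    rw [condDecomposition, ← Measure.map_congr (hp_eq x),
      Measure.map_apply (by fun_prop) hM]
    rfl
  simp only [hpreimage]
  exact Kernel.measurable_kernel_prodMk_left (hp_meas hM)

end CondDecomposition

section TailSigma

variable [MeasurableSpace E]

theorem cylSigma_eq_comap_domRestrict (Δ : Set S) :
    cylSigma S E Δ = MeasurableSpace.comap Δ.domRestrict MeasurableSpace.pi := by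
  simp only [cylSigma, MeasurableSpace.pi, MeasurableSpace.comap_iSup,
    MeasurableSpace.comap_comp, iSup_subtype]
  rfl

theorem cylSigma_le_pi (Δ : Set S) : cylSigma S E Δ ≤ MeasurableSpace.pi :=
  iSup₂_le fun i _ => (measurable_pi_apply i).comap_le

theorem cylSigma_mono {Δ Δ' : Set S} (h : Δ ⊆ Δ') : cylSigma S E Δ ≤ cylSigma S E Δ' :=
  biSup_mono fun _ hi => h hi

theorem antitone_cylSigma_compl :
    Antitone fun Λ : Finset S => cylSigma S E ((Λ : Set S)ᶜ) :=
  fun _ _ h => cylSigma_mono (Set.compl_subset_compl.2 (Finset.coe_subset.2 h))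

theorem tailSigma_le_cylSigma (Λ : Finset S) : tailSigma S E ≤ cylSigma S E ((Λ : Set S)ᶜ) :=
  iInf_le _ Λ

theorem tailSigma_le_pi : tailSigma S E ≤ MeasurableSpace.pi :=
  (tailSigma_le_cylSigma ∅).trans (cylSigma_le_pi _)

theorem iInf_cylSigma_compl_eq_tailSigma {V : ℕ → Finset S} (hV : Tendsto V atTop atTop) :
    ⨅ n, cylSigma S E ((V n : Set S)ᶜ) = tailSigma S E := by
  refine le_antisymm (le_iInf fun Λ => ?_) (le_iInf fun n => tailSigma_le_cylSigma _)
  obtain ⟨n, hn⟩ := (hV.eventually_ge_atTop Λ).exists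
  exact (iInf_le _ n).trans (antitone_cylSigma_compl hn)

theorem comap_cylSigma (τ : Equiv.Perm S) (Δ : Set S) :
    (cylSigma S E Δ).comap (· ∘ τ) = cylSigma S E (τ '' Δ) := by
  simp only [cylSigma, MeasurableSpace.comap_iSup, MeasurableSpace.comap_comp, iSup_image]
  rfl

theorem comap_tailSigma_le (τ : Equiv.Perm S) :
    (tailSigma S E).comap (· ∘ τ) ≤ tailSigma S E := by
  refine le_iInf fun Λ => ?_
  have himage : τ '' ((Λ.map τ.symm.toEmbedding : Finset S) : Set S)ᶜ = (Λ : Set S)ᶜ := by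
    rw [Set.image_compl_eq τ.bijective, Finset.coe_map, ← Set.image_comp]
    simp
  rw [← himage, ← comap_cylSigma]
  exact MeasurableSpace.comap_mono (tailSigma_le_cylSigma _)

theorem comap_tailSigma (τ : Equiv.Perm S) :
    (tailSigma S E).comap (· ∘ τ) = tailSigma S E := by
  refine le_antisymm (comap_tailSigma_le τ) ?_
  calc tailSigma S E
      = ((tailSigma S E).comap (· ∘ τ.symm)).comap (· ∘ τ) := by
        simp only [MeasurableSpace.comap_comp, Function.comp_def, Equiv.apply_symm_apply]
        exact MeasurableSpace.comap_id.symm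
    _ ≤ (tailSigma S E).comap (· ∘ τ) := MeasurableSpace.comap_mono (comap_tailSigma_le τ.symm)

theorem hasJointCondExpKernel_tailSigma {X : Type*} [MeasurableSpace X] [Countable S]
    [StandardBorelSpace E] (κ : Kernel X (S → E)) [IsMarkovKernel κ] :
    HasJointCondExpKernel (tailSigma S E) κ := by
  obtain ⟨V, hV_mono, hV⟩ := exists_seq_monotone_tendsto_atTop_atTop (Finset S)
  rw [← iInf_cylSigma_compl_eq_tailSigma hV]
  refine .iInf (antitone_cylSigma_compl.comp_monotone hV_mono) (fun n => cylSigma_le_pi _)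
    fun n => ?_
  rw [cylSigma_eq_comap_domRestrict]
  exact hasJointCondExpKernel_comap (Set.measurable_restrict _)

theorem condDecomposition_tailSigma_map [Countable S] [StandardBorelSpace E] (τ : Equiv.Perm S)
    (P : Measure (S → E)) [IsFiniteMeasure P] :
    condDecomposition (tailSigma S E) (P.map (· ∘ τ))
      = (condDecomposition (tailSigma S E) P).map (Measure.map (· ∘ τ)) := by
  have hτ : Measurable fun ω : S → E => ω ∘ τ :=
    measurable_pi_lambda _ fun i => measurable_pi_apply (τ i)
  rw [condDecomposition_map tailSigma_le_pi hτ, comap_tailSigma]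

end TailSigma

section MeasurableSetsOfMeasures

theorem measurableSet_setOf_isProbabilityMeasure {Ω : Type*} [MeasurableSpace Ω] :
    MeasurableSet {ν : Measure Ω | IsProbabilityMeasure ν} := by
  simp only [isProbabilityMeasure_iff]
  exact Measure.measurable_coe .univ (measurableSet_singleton 1)

theorem measurableSet_setOf_isProbabilityMeasure_and_ae {Ω : Type*} [MeasurableSpace Ω]
    {T : Set (Measure Ω × Ω)} (hT : MeasurableSet T) :
    MeasurableSet {ν : Measure Ω | IsProbabilityMeasure ν ∧ ∀ᵐ ω ∂ν, (ν, ω) ∈ T} := by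
  let κ : Kernel {ν : Measure Ω // IsProbabilityMeasure ν} Ω :=
    ⟨Subtype.val, measurable_subtype_coe⟩
  have : IsMarkovKernel κ := ⟨Subtype.prop⟩
  have hT' : MeasurableSet {z : {ν : Measure Ω // IsProbabilityMeasure ν} × Ω | (z.1.1, z.2) ∉ T} :=
    ((measurable_subtype_coe.comp measurable_fst).prodMk measurable_snd) hT.compl
  convert measurableSet_setOf_isProbabilityMeasure.subtype_image
    (Kernel.measurable_kernel_prodMk_left (κ := κ) hT' (measurableSet_singleton 0)) using 1
  ext ν
  simp only [Set.mem_image, Subtype.exists, exists_and_right, exists_eq_right]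
  exact ⟨fun h => ⟨h.1, h.2⟩, fun ⟨h, h'⟩ => ⟨h, h'⟩⟩

end MeasurableSetsOfMeasures

section Specification

variable [MeasurableSpace E] {γ : Finset S → (S → E) → Measure (S → E)} {Λ : Finset S}
  {A : Set (S → E)} {ν : Measure (S → E)}

namespace IsSpecification

theorem measurable (hγ : IsSpecification γ) (Λ : Finset S) : Measurable (γ Λ) :=
  Measure.measurable_of_measurable_coe _ fun A hA => (hγ.meas Λ A hA).mono (cylSigma_le_pi _) le_rfl

theorem measurable_real (hγ : IsSpecification γ) (Λ : Finset S) (hA : MeasurableSet A) :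
    Measurable[cylSigma S E ((Λ : Set S)ᶜ)] fun ω => (γ Λ ω).real A :=
  (hγ.meas Λ A hA).ennreal_toReal

theorem integrable_real [IsFiniteMeasure ν] (hγ : IsSpecification γ) (Λ : Finset S)
    (hA : MeasurableSet A) : Integrable (fun ω => (γ Λ ω).real A) ν := by
  have := hγ.prob Λ
  refine .of_bound ((hγ.measurable_real Λ hA).mono (cylSigma_le_pi _) le_rfl).aestronglyMeasurable
    1 (ae_of_all _ fun ω => ?_)
  rw [Real.norm_of_nonneg measureReal_nonneg]
  exact measureReal_le_one

theorem apply_inter (hγ : IsSpecification γ) {B : Set (S → E)}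
    (hB : MeasurableSet[cylSigma S E ((Λ : Set S)ᶜ)] B) (ω : S → E) :
    γ Λ ω (A ∩ B) = B.indicator (fun ω => γ Λ ω A) ω := by
  by_cases hω : ω ∈ B
  · rw [Set.indicator_of_mem hω]
    exact measure_inter_conull
      ((hγ.proper Λ Bᶜ hB.compl ω).trans (Set.indicator_of_notMem (not_not.2 hω) _))
  · rw [Set.indicator_of_notMem hω]
    exact measure_inter_null_of_null_right _
      ((hγ.proper Λ B hB ω).trans (Set.indicator_of_notMem hω _))

theorem setIntegral_real [IsFiniteMeasure ν] (hγ : IsSpecification γ) (Λ : Finset S)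
    (hA : MeasurableSet A) (B : Set (S → E)) :
    ∫ ω in B, (γ Λ ω).real A ∂ν = (∫⁻ ω in B, γ Λ ω A ∂ν).toReal := by
  have := hγ.prob Λ
  exact integral_toReal ((Measure.measurable_coe hA).comp (hγ.measurable Λ)).aemeasurable
    (ae_of_all _ fun ω => measure_lt_top _ _)

theorem real_ae_eq_condExp (hγ : IsSpecification γ) (hν : ν ∈ Gibbs γ) (Λ : Finset S)
    (hA : MeasurableSet A) :
    (fun ω => (γ Λ ω).real A) =ᵐ[ν] ν⟦A | cylSigma S E ((Λ : Set S)ᶜ)⟧ := by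
  have := hν.1
  refine ae_eq_condExp_of_forall_setIntegral_eq (cylSigma_le_pi _)
    ((integrable_const 1).indicator hA) (fun B _ _ => (hγ.integrable_real Λ hA).integrableOn)
    (fun B hB _ => ?_) (hγ.measurable_real Λ hA).stronglyMeasurable.aestronglyMeasurable
  have hB' := cylSigma_le_pi _ _ hB
  calc ∫ ω in B, (γ Λ ω).real A ∂ν = (∫⁻ ω in B, γ Λ ω A ∂ν).toReal :=
        hγ.setIntegral_real Λ hA B
    _ = (∫⁻ ω, γ Λ ω (A ∩ B) ∂ν).toReal := by
        rw [← lintegral_indicator hB']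
        simp only [hγ.apply_inter hB]
    _ = ν.real (A ∩ B) := by rw [hν.2 Λ _ (hA.inter hB'), measureReal_def]
    _ = ∫ ω in B, A.indicator (fun _ => (1 : ℝ)) ω ∂ν := by
        rw [integral_indicator_const _ hA, measureReal_restrict_apply hA, smul_eq_mul, mul_one]

theorem integral_real_eq_iff [IsFiniteMeasure ν] (hγ : IsSpecification γ) (Λ : Finset S)
    (hA : MeasurableSet A) :
    ∫ ω, (γ Λ ω).real A ∂ν = ν.real A ↔ ∫⁻ ω, γ Λ ω A ∂ν = ν A := by
  have := hγ.prob Λ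
  have hfin : ∫⁻ ω, γ Λ ω A ∂ν ≠ ∞ :=
    ((lintegral_mono fun ω => prob_le_one).trans_lt (by simp)).ne
  rw [← setIntegral_univ, hγ.setIntegral_real Λ hA, setLIntegral_univ, measureReal_def,
    ENNReal.toReal_eq_toReal_iff' hfin (measure_ne_top ν A)]

variable [Countable S] [StandardBorelSpace E]

theorem mem_gibbs_iff_forall_cut [IsProbabilityMeasure ν] (hγ : IsSpecification γ) :
    ν ∈ Gibbs γ ↔ ∀ Λ q, ∫⁻ ω, γ Λ ω (cut (S → E) q) ∂ν = ν (cut (S → E) q) := by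
  refine ⟨fun hν Λ q => hν.2 Λ _ (measurableSet_cut q), fun h => ⟨‹_›, fun Λ A hA => ?_⟩⟩
  have := hγ.prob Λ
  have hbind {A : Set (S → E)} (hA : MeasurableSet A) : ν.bind (γ Λ) A = ∫⁻ ω, γ Λ ω A ∂ν :=
    Measure.bind_apply hA (hγ.measurable Λ).aemeasurable
  have : IsProbabilityMeasure (ν.bind (γ Λ)) := ⟨by simp [hbind .univ]⟩
  rw [← hbind hA, eq_of_forall_cut fun q => (hbind (measurableSet_cut q)).trans (h Λ q)]

theorem measurableSet_gibbs (hγ : IsSpecification γ) : MeasurableSet (Gibbs γ) := by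
  have hdlr (Λ : Finset S) (q : ℚ) : MeasurableSet
      {ν : Measure (S → E) | ∫⁻ ω, γ Λ ω (cut (S → E) q) ∂ν = ν (cut (S → E) q)} :=
    have hcut := Measure.measurable_coe (measurableSet_cut (Ω := S → E) q)
    measurableSet_eq_fun (Measure.measurable_lintegral (hcut.comp (hγ.measurable Λ))) hcut
  convert measurableSet_setOf_isProbabilityMeasure.inter
    (.iInter fun Λ => .iInter (hdlr Λ)) using 1
  ext ν
  simp only [Set.mem_inter_iff, Set.mem_iInter]
  exact ⟨fun hν => have := hν.1; ⟨this, hγ.mem_gibbs_iff_forall_cut.1 hν⟩,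
    fun ⟨hprob, hν⟩ => have : IsProbabilityMeasure ν := hprob; hγ.mem_gibbs_iff_forall_cut.2 hν⟩

end IsSpecification

end Specification

section TypicalGibbs

variable [Countable S] [MeasurableSpace E] [StandardBorelSpace E]
  {γ : Finset S → (S → E) → Measure (S → E)} {ν P : Measure (S → E)}

/-- The Gibbs measures which almost all of their own configurations recover, as boundary
conditions, in the limit along the volumes `V n`. They are extreme Gibbs measures and, unlike
`exGibbs γ`, visibly form a measurable set. Testing the convergence on the countably many cuts
suffices to identify the limit. -/
def typicalGibbs (γ : Finset S → (S → E) → Measure (S → E)) (V : ℕ → Finset S) :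
    Set (Measure (S → E)) :=
  {ν | ν ∈ Gibbs γ ∧ ∀ q, ∀ᵐ ω ∂ν, Tendsto (fun n => (γ (V n) ω).real (cut (S → E) q)) atTop
    (𝓝 (ν.real (cut (S → E) q)))}

theorem measurableSet_typicalGibbs (hγ : IsSpecification γ) (V : ℕ → Finset S) :
    MeasurableSet (typicalGibbs γ V) := by
  have hlim (q : ℚ) : MeasurableSet {z : Measure (S → E) × (S → E) |
      Tendsto (fun n => (γ (V n) z.2).real (cut (S → E) q)) atTop
        (𝓝 (z.1.real (cut (S → E) q)))} :=
    have hcut := Measure.measurable_coe (measurableSet_cut (Ω := S → E) q)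
    measurableSet_tendsto_fun
      (fun n => (hcut.comp ((hγ.measurable (V n)).comp measurable_snd)).ennreal_toReal)
      (hcut.comp measurable_fst).ennreal_toReal
  convert hγ.measurableSet_gibbs.inter (.iInter fun q =>
    measurableSet_setOf_isProbabilityMeasure_and_ae (hlim q)) using 1
  ext ν
  simp only [Set.mem_inter_iff, Set.mem_iInter]
  exact ⟨fun hν => ⟨hν.1, fun q => ⟨hν.1.1, hν.2 q⟩⟩, fun hν => ⟨hν.1, fun q => (hν.2 q).2⟩⟩

theorem eq_of_absolutelyContinuous_typicalGibbs (hγ : IsSpecification γ) {V : ℕ → Finset S}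
    (hν : ν ∈ typicalGibbs γ V) (hP : P ∈ Gibbs γ) (hPν : P ≪ ν) : P = ν := by
  have := hP.1
  have := hν.1.1
  refine eq_of_forall_cut fun q => (measureReal_eq_measureReal_iff).1 ?_
  have hcut := measurableSet_cut (Ω := S → E) q
  have hlim : Tendsto (fun n => ∫ ω, (γ (V n) ω).real (cut (S → E) q) ∂P) atTop
      (𝓝 (∫ _, ν.real (cut (S → E) q) ∂P)) := by
    refine tendsto_integral_of_dominated_convergence (fun _ => 1)
      (fun n => (hγ.integrable_real (V n) hcut).1) (integrable_const 1)
      (fun n => ae_of_all _ fun ω => ?_) (hPν.ae_le (hν.2 q))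
    have := hγ.prob (V n) ω
    rw [Real.norm_of_nonneg measureReal_nonneg]
    exact measureReal_le_one
  have hdlr (n : ℕ) : ∫ ω, (γ (V n) ω).real (cut (S → E) q) ∂P = P.real (cut (S → E) q) :=
    (hγ.integral_real_eq_iff (V n) hcut).2 (hP.2 (V n) _ hcut)
  simp only [hdlr, integral_const, probReal_univ, one_smul] at hlim
  exact tendsto_nhds_unique tendsto_const_nhds hlim

theorem typicalGibbs_subset_exGibbs (hγ : IsSpecification γ) (V : ℕ → Finset S) :
    typicalGibbs γ V ⊆ exGibbs γ := by
  refine fun ν hν => ⟨hν.1, fun ν₁ hν₁ ν₂ hν₂ t ht ht' hsum => ?_⟩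
  have hac₁ : ν₁ ≪ ν := (Measure.absolutelyContinuous_smul ht.ne').trans
    (hsum ▸ (Measure.le_add_right le_rfl).absolutelyContinuous)
  have hac₂ : ν₂ ≪ ν := (Measure.absolutelyContinuous_smul (tsub_pos_of_lt ht').ne').trans
    (hsum ▸ (Measure.le_add_left le_rfl).absolutelyContinuous)
  exact ⟨eq_of_absolutelyContinuous_typicalGibbs hγ hν hν₁ hac₁,
    eq_of_absolutelyContinuous_typicalGibbs hγ hν hν₂ hac₂⟩

theorem ae_condExpKernel_tailSigma_mem_gibbs [IsFiniteMeasure P] (hγ : IsSpecification γ)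
    (hP : P ∈ Gibbs γ) : ∀ᵐ ω ∂P, condExpKernel P (tailSigma S E) ω ∈ Gibbs γ := by
  have hdlr (Λ : Finset S) (q : ℚ) : ∀ᵐ ω ∂P,
      ∫ σ, (γ Λ σ).real (cut (S → E) q) ∂condExpKernel P (tailSigma S E) ω
        = (condExpKernel P (tailSigma S E) ω).real (cut (S → E) q) := by
    have hcut := measurableSet_cut (Ω := S → E) q
    have htower : P[P⟦cut (S → E) q | cylSigma S E ((Λ : Set S)ᶜ)⟧ | tailSigma S E]
        =ᵐ[P] P⟦cut (S → E) q | tailSigma S E⟧ :=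
      condExp_condExp_of_le (tailSigma_le_cylSigma Λ) (cylSigma_le_pi _)
    filter_upwards [condExp_ae_eq_integral_condExpKernel tailSigma_le_pi
        (hγ.integrable_real (ν := P) Λ hcut),
      condExp_congr_ae (m := tailSigma S E) (hγ.real_ae_eq_condExp hP Λ hcut), htower,
      condExpKernel_ae_eq_condExp (μ := P) tailSigma_le_pi hcut] with ω hint hγω htowerω hcond
    rw [← hint, hγω, htowerω, hcond]
  filter_upwards [ae_all_iff.2 fun Λ => ae_all_iff.2 (hdlr Λ)] with ω hω
  exact hγ.mem_gibbs_iff_forall_cut.2 fun Λ q =>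
    (hγ.integral_real_eq_iff Λ (measurableSet_cut q)).1 (hω Λ q)

theorem ae_tendsto_specification_condExpKernel_tailSigma [IsFiniteMeasure P]
    (hγ : IsSpecification γ) (hP : P ∈ Gibbs γ)
    {V : ℕ → Finset S} (hV_mono : Monotone V) (hV : Tendsto V atTop atTop) {A : Set (S → E)}
    (hA : MeasurableSet A) : ∀ᵐ ω ∂P, Tendsto (fun n => (γ (V n) ω).real A) atTop
      (𝓝 ((condExpKernel P (tailSigma S E) ω).real A)) := by
  rw [← iInf_cylSigma_compl_eq_tailSigma hV]
  have hlim := ae_tendsto_condExpKernel_iInf (P := P) (m := fun n => cylSigma S E ((V n : Set S)ᶜ))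
    (antitone_cylSigma_compl.comp_monotone hV_mono) (fun n => cylSigma_le_pi _) hA
  filter_upwards [hlim, ae_all_iff.2 fun n => hγ.real_ae_eq_condExp hP (V n) hA,
    ae_all_iff.2 fun n => condExpKernel_ae_eq_condExp (μ := P) (cylSigma_le_pi ((V n : Set S)ᶜ)) hA]
    with ω hω hγω hcond
  exact hω.congr fun n => (hcond n).trans (hγω n).symm

theorem ae_condExpKernel_tailSigma_mem_typicalGibbs [IsFiniteMeasure P] (hγ : IsSpecification γ)
    (hP : P ∈ Gibbs γ) {V : ℕ → Finset S} (hV_mono : Monotone V) (hV : Tendsto V atTop atTop) :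
    ∀ᵐ ω ∂P, condExpKernel P (tailSigma S E) ω ∈ typicalGibbs γ V := by
  filter_upwards [ae_condExpKernel_tailSigma_mem_gibbs hγ hP,
    ae_condExpKernel_condExpKernel_eq (P := P) tailSigma_le_pi,
    ae_all_iff.2 fun q => ae_ae_condExpKernel tailSigma_le_pi
      (ae_tendsto_specification_condExpKernel_tailSigma hγ hP hV_mono hV (measurableSet_cut q))]
    with ω hgibbs hconst hlim
  refine ⟨hgibbs, fun q => ?_⟩
  filter_upwards [hconst, hlim q] with σ hσ hσlim
  rwa [hσ] at hσlim

theorem ae_condDecomposition_mem_typicalGibbs [IsFiniteMeasure P] (hγ : IsSpecification γ)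
    (hP : P ∈ Gibbs γ) {V : ℕ → Finset S} (hV_mono : Monotone V) (hV : Tendsto V atTop atTop) :
    ∀ᵐ ν ∂condDecomposition (tailSigma S E) P, ν ∈ typicalGibbs γ V :=
  (ae_map_iff (measurable_condExpKernel_of_le tailSigma_le_pi).aemeasurable
    (measurableSet_typicalGibbs hγ V)).2
      (ae_condExpKernel_tailSigma_mem_typicalGibbs hγ hP hV_mono hV)

end TypicalGibbs

section Shift

theorem map_measureMap_apply_image {Ω Ω' : Type*} [MeasurableSpace Ω] [MeasurableSpace Ω']
    (e : Ω ≃ᵐ Ω') (W : Measure (Measure Ω)) (M : Set (Measure Ω)) :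
    W.map (Measure.map e) (Measure.map e '' M) = W M := by
  let mapEquiv : Measure Ω ≃ᵐ Measure Ω' :=
    { toFun := Measure.map e
      invFun := Measure.map e.symm
      left_inv := fun _ => e.map_symm_map
      right_inv := fun _ => e.map_map_symm
      measurable_toFun := Measure.measurable_map _ e.measurable
      measurable_invFun := Measure.measurable_map _ e.symm.measurable }
  exact (mapEquiv.map_apply _).trans (congrArg W (mapEquiv.preimage_image M))

variable {d : ℕ} [MeasurableSpace E]

/-- The shift `θ_j` on configurations as a measurable equivalence. -/
def shiftEquiv (j : Fin d → ℤ) : ((Fin d → ℤ) → E) ≃ᵐ ((Fin d → ℤ) → E) where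
  toFun := shift j
  invFun := shift (-j)
  left_inv ω := by ext i; simp [shift]
  right_inv ω := by ext i; simp [shift]
  measurable_toFun := measurable_pi_lambda _ fun i => measurable_pi_apply (i - j)
  measurable_invFun := measurable_pi_lambda _ fun i => measurable_pi_apply (i - -j)

theorem eq_map_shift_of_forall_apply_image {P Q : Measure ((Fin d → ℤ) → E)} {j : Fin d → ℤ}
    (h : ∀ A, MeasurableSet A → Q A = P (shift (-j) '' A)) : Q = P.map (shift j) := by
  ext A hA
  rw [h A hA]
  exact (congrArg P ((shiftEquiv j).symm.image_eq_preimage_symm A)).trans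
    ((shiftEquiv j).map_apply A).symm

theorem apply_shiftMeasure_image_of_eq_map {W W' : Measure (Measure ((Fin d → ℤ) → E))}
    {j : Fin d → ℤ} (h : W' = W.map (shiftMeasure j)) (M : Set (Measure ((Fin d → ℤ) → E))) :
    W' (shiftMeasure j '' M) = W M :=
  h ▸ map_measureMap_apply_image (shiftEquiv j) W M

end Shift

theorem covariant_extremal_decomposition_general [Countable S] [MeasurableSpace E]
    [StandardBorelSpace E] [MeasurableSpace H]
    {γ : H → Finset S → (S → E) → Measure (S → E)} (hγ : ∀ ξ, IsSpecification (γ ξ))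
    {μ : H → Measure (S → E)} (hμ : Measurable μ) (hμprob : ∀ ξ, IsProbabilityMeasure (μ ξ)) :
    ∃ w : H → Measure (Measure (S → E)), Measurable w ∧
      (∀ ξ, IsProbabilityMeasure (w ξ)) ∧
      (∀ ξ, μ ξ ∈ Gibbs (γ ξ) → ∃ N : Set (Measure (S → E)), MeasurableSet N ∧ w ξ N = 0 ∧
        (exGibbs (γ ξ))ᶜ ⊆ N) ∧
      (∀ ξ, ∀ A : Set (S → E), MeasurableSet A → μ ξ A = ∫⁻ ν, ν A ∂(w ξ)) ∧
      ∀ ξ ξ', ∀ τ : Equiv.Perm S, μ ξ' = (μ ξ).map (· ∘ τ) →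
        w ξ' = (w ξ).map (Measure.map (· ∘ τ)) := by
  let κ : Kernel H (S → E) := ⟨μ, hμ⟩
  have : IsMarkovKernel κ := ⟨hμprob⟩
  obtain ⟨V, hV_mono, hV⟩ := exists_seq_monotone_tendsto_atTop_atTop (Finset S)
  refine ⟨fun ξ => condDecomposition (tailSigma S E) (μ ξ),
    (hasJointCondExpKernel_tailSigma κ).measurable_condDecomposition,
    fun ξ => isProbabilityMeasure_condDecomposition tailSigma_le_pi _,
    fun ξ hξ => ⟨(typicalGibbs (γ ξ) V)ᶜ, (measurableSet_typicalGibbs (hγ ξ) V).compl,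
      ae_condDecomposition_mem_typicalGibbs (hγ ξ) hξ hV_mono hV,
      Set.compl_subset_compl.2 (typicalGibbs_subset_exGibbs (hγ ξ) V)⟩,
    fun ξ A hA => (lintegral_condDecomposition_apply tailSigma_le_pi _ hA).symm,
    fun ξ ξ' τ hτ => ?_⟩
  simp only [hτ, condDecomposition_tailSigma_map]

end ExtremalDecomposition

/-- **Theorem 2 (translation-covariant extremal decomposition).** For a translation-covariant
random specification on `Ω = E^{ℤᵈ}` and a translation-covariant measurable random Gibbs
measure `ξ ↦ μ[ξ]`, the extremal decomposition map `ξ ↦ w[ξ]` of Theorem 1 can be chosen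
translation invariant: `w[θ_jξ](θ_jM) = w[ξ](M)` for a.e. `ξ`. -/
theorem covariant_extremal_decomposition
    {d : ℕ} [MeasurableSpace E] [StandardBorelSpace E] [MeasurableSpace H]
    (ℙ : Measure H) [IsProbabilityMeasure ℙ]
    (Θ : (Fin d → ℤ) → H → H)
    (hΘmeas : ∀ j, Measurable (Θ j))
    (hΘbij : ∀ j, Function.Bijective (Θ j))
    (γ : H → Finset (Fin d → ℤ) → ((Fin d → ℤ) → E) → Measure ((Fin d → ℤ) → E))
    (hγ : IsRandomSpecification γ)
    -- translation covariance of the random specification: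
    -- `γ_{θ_jΛ}[θ_jξ](θ_jA | θ_jω) = γ_Λ[ξ](A | ω)`
    (hγcov : ∀ (j : Fin d → ℤ) (Λ : Finset (Fin d → ℤ)), ∀ᵐ ξ ∂ℙ,
      ∀ A : Set ((Fin d → ℤ) → E), MeasurableSet A → ∀ ω,
        γ (Θ j ξ) (shiftFinset j Λ) (shift j ω) (shift j '' A) = γ ξ Λ ω A)
    (hGnonempty : ∀ᵐ ξ ∂ℙ, (Gibbs (γ ξ)).Nonempty)
    (μ : H → Measure ((Fin d → ℤ) → E))
    (hμmeas : Measurable μ)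
    (hμprob : ∀ ξ, IsProbabilityMeasure (μ ξ))
    (hμGibbs : ∀ᵐ ξ ∂ℙ, μ ξ ∈ Gibbs (γ ξ))
    -- translation covariance of the random Gibbs measure: `μ[θ_jξ](A) = μ[ξ](θ_{-j}A)`
    (hμcov : ∀ j : Fin d → ℤ, ∀ᵐ ξ ∂ℙ,
      ∀ A : Set ((Fin d → ℤ) → E), MeasurableSet A → μ (Θ j ξ) A = μ ξ (shift (-j) '' A)) :
    ∃ w : H → Measure (Measure ((Fin d → ℤ) → E)),
      -- the conclusions of the extremal decomposition theorem:
      Measurable w ∧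
      (∀ ξ, IsProbabilityMeasure (w ξ)) ∧
      (∀ᵐ ξ ∂ℙ, ∃ N : Set (Measure ((Fin d → ℤ) → E)), MeasurableSet N ∧ w ξ N = 0 ∧
        (exGibbs (γ ξ))ᶜ ⊆ N) ∧
      (∀ᵐ ξ ∂ℙ, ∀ A : Set ((Fin d → ℤ) → E), MeasurableSet A →
        μ ξ A = ∫⁻ ν, ν A ∂(w ξ)) ∧
      -- translation invariance: `w[θ_jξ](θ_jM) = w[ξ](M)`
      (∀ j : Fin d → ℤ, ∀ M : Set (Measure ((Fin d → ℤ) → E)), MeasurableSet M →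
        ∀ᵐ ξ ∂ℙ, w (Θ j ξ) (shiftMeasure j '' M) = w ξ M) := by
  obtain ⟨w, hw_meas, hw_prob, hw_ext, hw_bary, hw_cov⟩ :=
    covariant_extremal_decomposition_general hγ.spec hμmeas hμprob
  exact ⟨w, hw_meas, hw_prob, hμGibbs.mono hw_ext, ae_of_all _ hw_bary, fun j M _ =>
    (hμcov j).mono fun ξ hξ => apply_shiftMeasure_image_of_eq_map
      (hw_cov ξ (Θ j ξ) (Equiv.subRight j) (eq_map_shift_of_forall_apply_image hξ)) M⟩

end GibbsMeta
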